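/- arXiv:2102.02708 — 2 statements merged into one kernel-verified Lean document; each statement's English description precedes it below -/
import Mathlib

section
/- Let 0 < α ≤ 1 and let f ∈ ℝ[z₁,…,zₙ] be a multiaffine polynomial with nonnegative coefficients, f(1,…,1) > 0, that is Γ_α-stable, and let μ be the distribution on subsets of [n] generated by f. Then for every index i with P[i] > 0, the ℓ₁-norm of the i-th row of the correlation matrix is bounded: (1 − P[i]) + Σ_{j ≠ i} |P[j|i] − P[j]| ≤ 2/α. -/
open Finset

/-- `z` lies in the open sector `Γ_α` of aperture `απ` centered on the positive real axis. -/
def inSector (α : ℝ) (z : ℂ) : Prop := z ≠ 0 ∧ |z.arg| < α * Real.pi / 2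

/-!
Put `z_i = t` and `z_j = exp (s_j v)` with `-1 ≤ s_j ≤ 1`, so that `f` becomes `t A(v) + B(v)`. For
`|Im v| < απ/2` all the `z_j` lie in `Γ_α`, hence `t A(v) + B(v) ≠ 0` for every `t ∈ Γ_α`. By the
open mapping theorem each of `A`, `B` vanishes either identically or nowhere on this strip, and in
the latter case `-B/A` avoids `Γ_α`. So `log (B/A)` maps the strip of half-width `απ/2` into the
strip of half-width `π - απ/2`, and Schwarz–Pick bounds its derivative on the real axis by the ratio
`2/α - 1` of the half-widths. At `v = 0` that derivative is, up to the factor `-1/(1 - P[i])`, equal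
to `∑_j s_j (P[j|i] - P[j])`, and choosing the `s_j` to be the signs turns the bound into one on the
`ℓ₁`-norm.
-/

open Metric Topology

/-- The open horizontal strip of half-width `δ` around the real axis. -/
def strip (δ : ℝ) : Set ℂ := {z | |z.im| < δ}

lemma mem_strip {δ : ℝ} {z : ℂ} : z ∈ strip δ ↔ |z.im| < δ := Iff.rfl

lemma isOpen_strip (δ : ℝ) : IsOpen (strip δ) :=
  isOpen_lt (by fun_prop) continuous_const

lemma convex_strip (δ : ℝ) : Convex ℝ (strip δ) := by
  have h : strip δ = Complex.imLm ⁻¹' ball 0 δ := by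
    ext z
    simp [strip]
  exact h ▸ (convex_ball 0 δ).linear_preimage Complex.imLm

lemma norm_sub_le_norm_add_conj {z w : ℂ} (h : 0 ≤ z.re * w.re) :
    ‖z - w‖ ≤ ‖z + (starRingEnd ℂ) w‖ := by
  rw [← sq_le_sq₀ (norm_nonneg _) (norm_nonneg _), Complex.sq_norm, Complex.sq_norm,
    Complex.normSq_apply, Complex.normSq_apply]
  simp only [Complex.sub_re, Complex.sub_im, Complex.add_re, Complex.add_im, Complex.conj_re,
    Complex.conj_im]
  linarith

lemma norm_deriv_le_of_re_nonneg {f : ℂ → ℂ} {z : ℂ} {R : ℝ} (hR : 0 < R)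
    (hf : DifferentiableOn ℂ f (ball z R)) (hre : ∀ w ∈ ball z R, 0 ≤ (f w).re)
    (hz : 0 < (f z).re) : ‖deriv f z‖ ≤ 2 * (f z).re / R := by
  have hmem : z ∈ ball z R := mem_ball_self hR
  have hden : ∀ w ∈ ball z R, f w + (starRingEnd ℂ) (f z) ≠ 0 := fun w hw h ↦ by
    have hre_sum := congrArg Complex.re h
    simp only [Complex.add_re, Complex.conj_re, Complex.zero_re] at hre_sum
    linarith [hre w hw]
  let cayley : ℂ → ℂ := fun w ↦ (f w - f z) / (f w + (starRingEnd ℂ) (f z))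
  have hdiff : DifferentiableOn ℂ cayley (ball z R) :=
    (hf.sub_const _).fun_div (hf.add_const _) hden
  have hmaps : Set.MapsTo cayley (ball z R) (closedBall (cayley z) 1) := fun w hw ↦ by
    simpa [cayley] using div_le_one_of_le₀
      (norm_sub_le_norm_add_conj (mul_nonneg (hre w hw) hz.le)) (norm_nonneg _)
  have hderiv : deriv cayley z = deriv f z / (2 * (f z).re : ℝ) := by
    have hfz := (hf.differentiableAt (isOpen_ball.mem_nhds hmem)).hasDerivAt
    have h := (hfz.sub_const (f z)).fun_div (hfz.add_const ((starRingEnd ℂ) (f z))) (hden z hmem)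
    rw [h.deriv, sub_self, zero_mul, sub_zero, sq, mul_div_mul_right _ _ (hden z hmem),
      Complex.add_conj]
  have hschwarz := Complex.norm_deriv_le_div_of_mapsTo_ball hdiff hmaps hR
  rw [hderiv, norm_div, Complex.norm_of_nonneg (by positivity), div_le_iff₀ (by positivity)]
    at hschwarz
  exact hschwarz.trans_eq (by ring)

lemma norm_deriv_le_of_mapsTo_strip {f : ℂ → ℂ} {z : ℂ} {R δ : ℝ} (hR : 0 < R)
    (hf : DifferentiableOn ℂ f (ball z R)) (hmaps : Set.MapsTo f (ball z R) (strip δ)) :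
    ‖deriv f z‖ ≤ 4 * δ / (Real.pi * R) := by
  have hmem : z ∈ ball z R := mem_ball_self hR
  have hδ : 0 < δ := (abs_nonneg _).trans_lt (hmaps hmem)
  -- `w ↦ exp (m w)` maps the strip into the right half-plane.
  set m : ℝ := Real.pi / (2 * δ) with hm
  have hm0 : 0 < m := by positivity
  have hre : ∀ w ∈ ball z R, 0 < (Complex.exp (m * f w)).re := fun w hw ↦ by
    have him : |m * (f w).im| < Real.pi / 2 := by
      rw [abs_mul, abs_of_pos hm0]
      calc m * |(f w).im| < m * δ := mul_lt_mul_of_pos_left (hmaps hw) hm0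
        _ = Real.pi / 2 := by rw [hm]; field_simp
    rw [Complex.exp_re, Complex.im_ofReal_mul]
    exact mul_pos (Real.exp_pos _) (Real.cos_pos_of_mem_Ioo (abs_lt.1 him))
  have hderiv : deriv (fun w ↦ Complex.exp (m * f w)) z
      = Complex.exp (m * f z) * (m * deriv f z) :=
    ((hf.differentiableAt (isOpen_ball.mem_nhds hmem)).hasDerivAt.const_mul (m : ℂ)).cexp.deriv
  have hbound := (norm_deriv_le_of_re_nonneg hR (hf.const_mul (m : ℂ)).cexp
    (fun w hw ↦ (hre w hw).le) (hre z hmem)).trans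
      (div_le_div_of_nonneg_right (mul_le_mul_of_nonneg_left (Complex.re_le_norm _) zero_le_two)
        hR.le)
  rw [hderiv, norm_mul, mul_comm 2, mul_div_assoc] at hbound
  replace hbound := le_of_mul_le_mul_left hbound (norm_pos_iff.2 (Complex.exp_ne_zero _))
  rw [norm_mul, Complex.norm_of_nonneg hm0.le, mul_comm, ← le_div_iff₀ hm0] at hbound
  exact hbound.trans_eq (by rw [hm]; field_simp; norm_num)

lemma re_one_add_div_one_sub_pos {u : ℂ} (hu : ‖u‖ < 1) : 0 < ((1 + u) / (1 - u)).re := by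
  have hne : 1 - u ≠ 0 := fun h ↦ by simp [← sub_eq_zero.1 h] at hu
  have hsq : u.re * u.re + u.im * u.im < 1 := by
    rw [← Complex.normSq_apply, ← Complex.sq_norm]
    exact pow_lt_one₀ (norm_nonneg u) hu two_ne_zero
  rw [Complex.div_re, ← add_div]
  refine div_pos ?_ (Complex.normSq_pos.2 hne)
  simp only [Complex.add_re, Complex.sub_re, Complex.one_re, Complex.add_im, Complex.sub_im,
    Complex.one_im]
  linarith

lemma exists_hasDerivAt_mapsTo_strip {δ : ℝ} (hδ : 0 < δ) :
    ∃ ψ : ℂ → ℂ, DifferentiableOn ℂ ψ (ball 0 1) ∧ Set.MapsTo ψ (ball 0 1) (strip δ) ∧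
      ψ 0 = 0 ∧ HasDerivAt ψ ((4 * δ / Real.pi : ℝ) : ℂ) 0 := by
  set m : ℝ := 2 * δ / Real.pi with hm
  have hm0 : 0 < m := by positivity
  have hre : ∀ u ∈ ball (0 : ℂ) 1, 0 < ((1 + u) / (1 - u)).re := fun u hu ↦
    re_one_add_div_one_sub_pos (mem_ball_zero_iff.1 hu)
  refine ⟨fun u ↦ m * Complex.log ((1 + u) / (1 - u)), ?_, fun u hu ↦ ?_, by simp, ?_⟩
  · refine ((DifferentiableOn.fun_div (by fun_prop) (by fun_prop) fun u hu h ↦ ?_).clog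
      fun u hu ↦ Or.inl (hre u hu)).const_mul _
    simpa [h] using hre u hu
  · change |(m * Complex.log ((1 + u) / (1 - u))).im| < δ
    rw [Complex.im_ofReal_mul, Complex.log_im, abs_mul, abs_of_pos hm0]
    calc m * |((1 + u) / (1 - u)).arg| < m * (Real.pi / 2) :=
          mul_lt_mul_of_pos_left (Complex.abs_arg_lt_pi_div_two_iff.2 (Or.inl (hre u hu))) hm0
      _ = δ := by rw [hm]; field_simp
  · have hquot := ((hasDerivAt_id (0 : ℂ)).const_add 1).fun_div
      ((hasDerivAt_id (0 : ℂ)).const_sub 1) (by simp)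
    refine ((hquot.clog (by simp)).const_mul (m : ℂ)).congr_deriv ?_
    rw [hm]
    simp only [id, add_zero, sub_zero]
    push_cast
    field_simp
    ring

lemma norm_deriv_le_div_of_mapsTo_strip {g : ℂ → ℂ} {z : ℂ} {δ₁ δ₂ : ℝ}
    (hg : DifferentiableOn ℂ g (strip δ₁)) (hmaps : ∀ w ∈ strip δ₁, |(g w).im| ≤ δ₂)
    (hδ₁ : 0 < δ₁) (hz : z.im = 0) : ‖deriv g z‖ ≤ δ₂ / δ₁ := by
  obtain ⟨ψ, hψ, hψ_maps, hψ0, hψ_deriv⟩ := exists_hasDerivAt_mapsTo_strip hδ₁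
  have htrans : Set.MapsTo (fun u ↦ z + ψ u) (ball 0 1) (strip δ₁) := fun u hu ↦ by
    simpa [strip, hz] using hψ_maps hu
  have hzψ : z + ψ 0 = z := by rw [hψ0, add_zero]
  have hg' : HasDerivAt g (deriv g z) (z + ψ 0) := by
    rw [hzψ]
    exact (hg.differentiableAt
      ((isOpen_strip δ₁).mem_nhds (by simpa [strip, hz] using hδ₁))).hasDerivAt
  have hcomp : deriv (fun u ↦ g (z + ψ u)) 0 = deriv g z * (4 * δ₁ / Real.pi : ℝ) :=
    (hg'.comp 0 (hψ_deriv.const_add z)).deriv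
  refine (le_div_iff₀ hδ₁).2 (le_of_forall_gt_imp_ge_of_dense fun δ hδ ↦ ?_)
  have hbound := norm_deriv_le_of_mapsTo_strip one_pos (hg.comp (hψ.const_add z) htrans)
    fun u hu ↦ (hmaps _ (htrans hu)).trans_lt hδ
  have hpi := Real.pi_pos
  change ‖deriv (fun u ↦ g (z + ψ u)) 0‖ ≤ _ at hbound
  rw [hcomp, norm_mul, Complex.norm_of_nonneg (by positivity), mul_one, ← mul_div_assoc,
    div_le_div_iff_of_pos_right hpi] at hbound
  linarith

lemma eventually_eq_zero_of_forall_ne_neg {f : ℂ → ℂ} {z : ℂ} (hf : AnalyticAt ℂ f z)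
    (hz : f z = 0) (hne : ∀ᶠ w in 𝓝 z, ∀ t : ℝ, 0 < t → f w ≠ -t) : ∀ᶠ w in 𝓝 z, f w = 0 := by
  refine (hf.eventually_constant_or_nhds_le_map_nhds.resolve_right fun hopen ↦ ?_).mono
    fun w hw ↦ hw.trans hz
  have homit : ∀ᶠ y in 𝓝 (0 : ℂ), ∀ t : ℝ, 0 < t → y ≠ -(t : ℂ) := hz ▸ hopen hne
  have hlim : Filter.Tendsto (fun t : ℝ ↦ -(t : ℂ)) (𝓝[>] (0 : ℝ)) (𝓝 0) := by
    have hcont : Continuous fun t : ℝ ↦ -(t : ℂ) := by fun_prop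
    simpa using (hcont.tendsto 0).mono_left nhdsWithin_le_nhds
  obtain ⟨t, homit_t, ht⟩ := ((hlim.eventually homit).and self_mem_nhdsWithin).exists
  exact homit_t t ht rfl

lemma eqOn_zero_or_forall_ne_zero {U : Set ℂ} (hU : IsOpen U) (hUc : IsPreconnected U)
    {a b : ℂ → ℂ} (ha : DifferentiableOn ℂ a U) (hb : DifferentiableOn ℂ b U)
    (hab : ∀ w ∈ U, ∀ t : ℝ, 0 < t → t * a w + b w ≠ 0) :
    Set.EqOn a 0 U ∨ ∀ w ∈ U, a w ≠ 0 := by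
  refine or_iff_not_imp_right.2 fun h ↦ ?_
  push Not at h
  obtain ⟨z, hz, haz⟩ := h
  have hbz : b z ≠ 0 := by simpa [haz] using hab z hz 1 one_pos
  have hUz : U ∈ 𝓝 z := hU.mem_nhds hz
  have hbU : ∀ᶠ w in 𝓝 z, b w ≠ 0 := (hb.analyticAt hUz).continuousAt.eventually_ne hbz
  have hquot : ∀ᶠ w in 𝓝 z, a w / b w = 0 := by
    refine eventually_eq_zero_of_forall_ne_neg ((ha.analyticAt hUz).fun_div (hb.analyticAt hUz) hbz)
      (by simp [haz]) ?_
    filter_upwards [hUz, hbU] with w hw hbw t ht heq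
    refine hab w hw t⁻¹ (inv_pos.2 ht) ?_
    have ht' : (t : ℂ) ≠ 0 := Complex.ofReal_ne_zero.2 ht.ne'
    rw [(div_eq_iff hbw).1 heq]
    push_cast
    field_simp
    ring
  have hazero : a =ᶠ[𝓝 z] 0 := by
    filter_upwards [hquot, hbU] with w hw hbw
    exact (div_eq_zero_iff.1 hw).resolve_right hbw
  exact (ha.analyticOnNhd hU).eqOn_zero_of_preconnected_of_eventuallyEq_zero hUc hz hazero

lemma abs_arg_neg {z : ℂ} (hz : z ≠ 0) : |(-z).arg| = Real.pi - |z.arg| := by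
  rcases lt_trichotomy z.im 0 with him | him | him
  · rw [Complex.arg_neg_eq_arg_add_pi_of_im_neg him, abs_of_neg (Complex.arg_neg_iff.2 him),
      abs_of_pos (by linarith [Complex.neg_pi_lt_arg z])]
    ring
  · obtain ⟨x, rfl⟩ : ∃ x : ℝ, (x : ℂ) = z := ⟨z.re, Complex.ext rfl him.symm⟩
    rw [← Complex.ofReal_neg]
    rcases (Complex.ofReal_ne_zero.1 hz).lt_or_gt with hx | hx
    · rw [Complex.arg_ofReal_of_neg hx, Complex.arg_ofReal_of_nonneg (by linarith),
        abs_of_pos Real.pi_pos]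
      simp
    · rw [Complex.arg_ofReal_of_neg (by linarith), Complex.arg_ofReal_of_nonneg hx.le,
        abs_of_pos Real.pi_pos]
      simp
  · rw [Complex.arg_neg_eq_arg_sub_pi_of_im_pos him,
      abs_of_nonneg (Complex.arg_nonneg_iff.2 him.le),
      abs_of_nonpos (by linarith [Complex.arg_le_pi z])]
    ring

lemma not_inSector_neg_iff {α : ℝ} {z : ℂ} (hz : z ≠ 0) :
    ¬inSector α (-z) ↔ |z.arg| ≤ Real.pi - α * Real.pi / 2 := by
  rw [inSector, abs_arg_neg hz, and_iff_right (neg_ne_zero.2 hz), not_lt]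
  constructor <;> intro h <;> linarith

lemma inSector_exp {α : ℝ} (hα : α ≤ 2) {v : ℂ} (hv : v ∈ strip (α * Real.pi / 2)) :
    inSector α (Complex.exp v) := by
  have hbounds := abs_lt.1 (mem_strip.1 hv)
  have hle : α * Real.pi / 2 ≤ Real.pi := by nlinarith [Real.pi_pos]
  have harg : (Complex.exp v).arg = v.im := by
    rw [← Complex.log_im, Complex.log_exp] <;> linarith
  exact ⟨Complex.exp_ne_zero v, harg.symm ▸ hv⟩

lemma inSector_ofReal {α : ℝ} (hα : 0 < α) {t : ℝ} (ht : 0 < t) : inSector α (t : ℂ) := by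
  refine ⟨Complex.ofReal_ne_zero.2 ht.ne', ?_⟩
  rw [Complex.arg_ofReal_of_nonneg ht.le, abs_zero]
  positivity

lemma norm_logDeriv_le_of_forall_not_inSector_neg {h : ℂ → ℂ} {z : ℂ} {α δ : ℝ} (hα : 0 < α)
    (hh : DifferentiableOn ℂ h (strip δ)) (hne : ∀ w ∈ strip δ, h w ≠ 0)
    (hsec : ∀ w ∈ strip δ, ¬inSector α (-h w)) (hδ : 0 < δ) (hz : z.im = 0) :
    ‖logDeriv h z‖ ≤ (Real.pi - α * Real.pi / 2) / δ := by
  have harg : ∀ w ∈ strip δ, |(h w).arg| ≤ Real.pi - α * Real.pi / 2 := fun w hw ↦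
    (not_inSector_neg_iff (hne w hw)).1 (hsec w hw)
  have hslit : ∀ w ∈ strip δ, h w ∈ Complex.slitPlane := fun w hw ↦ by
    refine Complex.mem_slitPlane_iff_arg.2 ⟨fun hpi ↦ ?_, hne w hw⟩
    have hle := harg w hw
    rw [hpi, abs_of_pos Real.pi_pos] at hle
    linarith [mul_pos hα Real.pi_pos]
  have hmem : z ∈ strip δ := by simpa [strip, hz] using hδ
  have hderiv : deriv (fun w ↦ Complex.log (h w)) z = logDeriv h z :=
    ((hh.differentiableAt ((isOpen_strip δ).mem_nhds hmem)).hasDerivAt.clog (hslit z hmem)).deriv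
  rw [← hderiv]
  exact norm_deriv_le_div_of_mapsTo_strip (hh.clog hslit)
    (fun w hw ↦ by simpa only [Complex.log_im] using harg w hw) hδ hz

-- Clearing denominators in the bound on the derivative of `log (B/A)` lets `A` or `B` vanish.
lemma norm_wronskian_le {A B : ℂ → ℂ} {z : ℂ} {α δ : ℝ} (hα : 0 < α)
    (hA : DifferentiableOn ℂ A (strip δ)) (hB : DifferentiableOn ℂ B (strip δ))
    (hAB : ∀ w ∈ strip δ, ∀ t, inSector α t → t * A w + B w ≠ 0) (hδ : 0 < δ) (hz : z.im = 0) :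
    ‖A z * deriv B z - B z * deriv A z‖
      ≤ (Real.pi - α * Real.pi / 2) / δ * ‖A z * B z‖ := by
  have hmem : z ∈ strip δ := by simpa [strip, hz] using hδ
  have hU : strip δ ∈ 𝓝 z := (isOpen_strip δ).mem_nhds hmem
  have hconn : IsPreconnected (strip δ) := (convex_strip δ).isPreconnected
  have of_eqOn_zero : ∀ {F : ℂ → ℂ}, Set.EqOn F 0 (strip δ) → F z = 0 ∧ deriv F z = 0 :=
    fun hF ↦ ⟨hF hmem, by simpa using (Filter.eventuallyEq_of_mem hU hF).deriv_eq⟩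
  have hAB_ray : ∀ w ∈ strip δ, ∀ t : ℝ, 0 < t → t * A w + B w ≠ 0 := fun w hw t ht ↦
    hAB w hw t (inSector_ofReal hα ht)
  have hBA_ray : ∀ w ∈ strip δ, ∀ t : ℝ, 0 < t → t * B w + A w ≠ 0 := fun w hw t ht h ↦ by
    have ht' : (t : ℂ) ≠ 0 := Complex.ofReal_ne_zero.2 ht.ne'
    refine hAB_ray w hw t⁻¹ (inv_pos.2 ht) ?_
    push_cast
    field_simp
    linear_combination h
  rcases eqOn_zero_or_forall_ne_zero (isOpen_strip δ) hconn hA hB hAB_ray with hA0 | hA0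
  · simp [of_eqOn_zero hA0]
  rcases eqOn_zero_or_forall_ne_zero (isOpen_strip δ) hconn hB hA hBA_ray with hB0 | hB0
  · simp [of_eqOn_zero hB0]
  have hlog := norm_logDeriv_le_of_forall_not_inSector_neg hα (hB.fun_div hA hA0)
    (fun w hw ↦ div_ne_zero (hB0 w hw) (hA0 w hw))
    (fun w hw hsec ↦ hAB w hw _ hsec (by have := hA0 w hw; field_simp; ring)) hδ hz
  have hAz := hA0 z hmem
  have hBz := hB0 z hmem
  rw [logDeriv_div z hBz hAz (hB.differentiableAt hU) (hA.differentiableAt hU)] at hlog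
  have hfactor : A z * deriv B z - B z * deriv A z
      = (logDeriv B z - logDeriv A z) * (A z * B z) := by
    rw [logDeriv_apply, logDeriv_apply]
    field_simp
  rw [hfactor, norm_mul]
  exact mul_le_mul_of_nonneg_right hlog (norm_nonneg _)

lemma sum_abs_le_of_forall_sum_mul_le {κ : Type*} {F : Finset κ} {y : κ → ℝ} {M : ℝ}
    (h : ∀ s : κ → ℝ, (∀ j, |s j| ≤ 1) → ∑ j ∈ F, s j * y j ≤ M) : ∑ j ∈ F, |y j| ≤ M := by
  have hsign (x : ℝ) : |(SignType.sign x : ℝ)| ≤ 1 := by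
    rcases lt_trichotomy x 0 with hx | hx | hx <;> simp [hx]
  simpa only [sign_mul_self] using h (fun j ↦ SignType.sign (y j)) fun j ↦ hsign _

section

variable {ι : Type*} [DecidableEq ι]

/-- The contribution of the sets in `F` to the multiaffine polynomial with coefficients `c`, along
the curve `z_j = exp (s j * v)` for `j ≠ i` and `z_i = 1`. Erasing `i` freezes that coordinate at
`1`, so that `F = {S | i ∈ S}` gives the coefficient of `z_i` along the curve. -/
noncomputable def curveSum (c : Finset ι → ℂ) (i : ι) (s : ι → ℂ) (F : Finset (Finset ι))
    (v : ℂ) : ℂ :=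
  ∑ S ∈ F, c S * Complex.exp ((∑ j ∈ S.erase i, s j) * v)

lemma curveSum_zero (c : Finset ι → ℂ) (i : ι) (s : ι → ℂ) (F : Finset (Finset ι)) :
    curveSum c i s F 0 = ∑ S ∈ F, c S := by
  simp [curveSum]

lemma differentiable_curveSum (c : Finset ι → ℂ) (i : ι) (s : ι → ℂ) (F : Finset (Finset ι)) :
    Differentiable ℂ (curveSum c i s F) := by
  unfold curveSum
  fun_prop

variable [Fintype ι]

lemma sum_mul_sum_erase (c : Finset ι → ℂ) (i : ι) (s : ι → ℂ) (F : Finset (Finset ι)) :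
    ∑ S ∈ F, c S * ∑ j ∈ S.erase i, s j = ∑ j ∈ univ.erase i, s j * ∑ S ∈ F with j ∈ S, c S := by
  simp_rw [mul_sum, mul_comm (s _)]
  exact sum_comm' (by simp only [mem_filter, mem_erase, mem_univ]; tauto)

lemma deriv_curveSum_zero (c : Finset ι → ℂ) (i : ι) (s : ι → ℂ) (F : Finset (Finset ι)) :
    deriv (curveSum c i s F) 0 = ∑ j ∈ univ.erase i, s j * ∑ S ∈ F with j ∈ S, c S := by
  have hderiv : HasDerivAt (curveSum c i s F) _ 0 := HasDerivAt.fun_sum fun S _ ↦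
    (((hasDerivAt_id (0 : ℂ)).const_mul (∑ j ∈ S.erase i, s j)).cexp).const_mul (c S)
  rw [hderiv.deriv, ← sum_mul_sum_erase]
  simp

/-- `Γ_α`-stability of the multiaffine polynomial `∑ S, c S * ∏ i ∈ S, z i`, encoded by its
coefficients. -/
def IsSectorStable (α : ℝ) (c : Finset ι → ℂ) : Prop :=
  ∀ z : ι → ℂ, (∀ i, inSector α (z i)) → ∑ S, c S * ∏ i ∈ S, z i ≠ 0

lemma IsSectorStable.mul_curveSum_add_curveSum_ne_zero {α : ℝ} {c : Finset ι → ℂ}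
    (hc : IsSectorStable α c) (hα : α ≤ 2) (i : ι) {s : ι → ℝ} (hs : ∀ j, |s j| ≤ 1) {v : ℂ}
    (hv : v ∈ strip (α * Real.pi / 2)) {t : ℂ} (ht : inSector α t) :
    t * curveSum c i (fun j ↦ s j) {S | i ∈ S} v
      + curveSum c i (fun j ↦ s j) {S | i ∉ S} v ≠ 0 := by
  have hcurve : ∀ j, inSector α (Complex.exp (s j * v)) := fun j ↦ by
    refine inSector_exp hα (mem_strip.2 (lt_of_le_of_lt ?_ hv))
    rw [Complex.im_ofReal_mul, abs_mul]
    exact mul_le_of_le_one_left (abs_nonneg _) (hs j)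
  convert hc (Function.update (fun j ↦ Complex.exp (s j * v)) i t) fun j ↦ ?_ using 1
  · rw [← sum_filter_add_sum_filter_not univ (i ∈ ·), curveSum, curveSum, mul_sum]
    congr 1
    · refine sum_congr rfl fun S hS ↦ ?_
      rw [prod_update_of_mem (mem_filter.1 hS).2, sdiff_singleton_eq_erase, ← Complex.exp_sum,
        sum_mul]
      ring
    · refine sum_congr rfl fun S hS ↦ ?_
      rw [prod_update_of_notMem (mem_filter.1 hS).2, erase_eq_of_notMem (mem_filter.1 hS).2,
        ← Complex.exp_sum, sum_mul]
  · rcases eq_or_ne j i with rfl | hji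
    · simpa using ht
    · simpa [hji] using hcurve j

lemma IsSectorStable.zero_le_mul {α : ℝ} {c : Finset ι → ℝ}
    (hc : IsSectorStable α fun S ↦ (c S : ℂ)) (hα0 : 0 < α) (hα2 : α ≤ 2) (i : ι) :
    0 ≤ (∑ S with i ∈ S, c S) * ∑ S with i ∉ S, c S := by
  by_contra! hneg
  set a := ∑ S with i ∈ S, c S with ha
  set b := ∑ S with i ∉ S, c S with hb
  have ha0 : a ≠ 0 := left_ne_zero_of_mul hneg.ne
  have ht : 0 < -b / a := by
    rw [← mul_div_mul_left (-b) a ha0]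
    exact div_pos (by linarith) (mul_self_pos.2 ha0)
  have hmem : (0 : ℂ) ∈ strip (α * Real.pi / 2) := by
    rw [mem_strip, Complex.zero_im, abs_zero]
    positivity
  have hstable := hc.mul_curveSum_add_curveSum_ne_zero hα2 i (s := 0) (by simp)
    (v := 0) hmem (inSector_ofReal hα0 ht)
  rw [curveSum_zero, curveSum_zero, ← Complex.ofReal_sum, ← Complex.ofReal_sum, ← ha, ← hb]
    at hstable
  refine hstable ?_
  exact_mod_cast (by field_simp; ring : -b / a * a + b = 0)

lemma IsSectorStable.sum_abs_le {α : ℝ} {c : Finset ι → ℝ}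
    (hc : IsSectorStable α fun S ↦ (c S : ℂ)) (hα0 : 0 < α) (hα2 : α ≤ 2) (i : ι) :
    ∑ j ∈ univ.erase i, |(∑ S with i ∉ S, c S) * ∑ S with i ∈ S ∧ j ∈ S, c S
        - (∑ S with i ∈ S, c S) * ∑ S with i ∉ S ∧ j ∈ S, c S|
      ≤ (2 / α - 1) * |(∑ S with i ∈ S, c S) * ∑ S with i ∉ S, c S| := by
  refine sum_abs_le_of_forall_sum_mul_le fun s hs ↦ (le_abs_self _).trans ?_
  have hδ : 0 < α * Real.pi / 2 := by positivity
  have hratio : (Real.pi - α * Real.pi / 2) / (α * Real.pi / 2) = 2 / α - 1 := by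
    field_simp
  have hbound := norm_wronskian_le (z := 0) hα0
    (differentiable_curveSum _ i (fun j ↦ s j) _).differentiableOn
    (differentiable_curveSum _ i (fun j ↦ s j) _).differentiableOn
    (fun v hv t ht ↦ hc.mul_curveSum_add_curveSum_ne_zero hα2 i hs hv ht) hδ Complex.zero_im
  simp only [curveSum_zero, deriv_curveSum_zero, filter_filter, hratio, mul_sum (univ.erase i)]
    at hbound
  rw [norm_sub_rev, ← sum_sub_distrib] at hbound
  simp only [mul_left_comm _ (s _ : ℂ), ← mul_sub] at hbound
  exact_mod_cast hbound

theorem correlation_row_norm_bound_of_sector_stable_general {α : ℝ} (hα0 : 0 < α) (hα2 : α ≤ 2)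
    {c : Finset ι → ℝ} (hc : IsSectorStable α fun S ↦ (c S : ℂ)) {i : ι}
    (hi : ∑ S with i ∈ S, c S ≠ 0) :
    (1 - (∑ S with i ∈ S, c S) / ∑ S, c S) +
      ∑ j ∈ univ.erase i, |(∑ S with i ∈ S ∧ j ∈ S, c S) / (∑ S with i ∈ S, c S) -
        (∑ S with j ∈ S, c S) / ∑ S, c S|
      ≤ 2 / α * (1 - (∑ S with i ∈ S, c S) / ∑ S, c S) := by
  have hab := hc.zero_le_mul hα0 hα2 i
  have hsum := hc.sum_abs_le hα0 hα2 i
  have hsplit (j : ι) : ∑ S with j ∈ S, c S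
      = ∑ S with i ∈ S ∧ j ∈ S, c S + ∑ S with i ∉ S ∧ j ∈ S, c S := by
    rw [← sum_filter_add_sum_filter_not _ (i ∈ ·)]
    simp only [filter_filter, and_comm]
  rw [← sum_filter_add_sum_filter_not univ (i ∈ ·) c]
  set a := ∑ S with i ∈ S, c S
  set b := ∑ S with i ∉ S, c S
  rw [abs_of_nonneg hab] at hsum
  have hden : 0 < a * (a + b) := by
    rw [mul_add]
    exact add_pos_of_pos_of_nonneg (mul_self_pos.2 hi) hab
  have htotal : a + b ≠ 0 := right_ne_zero_of_mul hden.ne'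
  have hcorr (j : ι) : |(∑ S with i ∈ S ∧ j ∈ S, c S) / a - (∑ S with j ∈ S, c S) / (a + b)|
      = |b * ∑ S with i ∈ S ∧ j ∈ S, c S - a * ∑ S with i ∉ S ∧ j ∈ S, c S| / (a * (a + b)) := by
    rw [hsplit j, ← abs_of_pos hden, ← abs_div, div_sub_div _ _ hi htotal]
    ring_nf
  have hcompl : 1 - a / (a + b) = a * b / (a * (a + b)) := by
    field_simp
    ring
  simp only [hcorr, hcompl, ← sum_div]
  rw [← add_div, ← mul_div_assoc]
  gcongr
  linarith

end

/-- Sector-stability implies a `2/α` bound on the ℓ₁-norm of each row of the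
correlation matrix of the distribution `μ(S) = c S / f(1,…,1)` generated by
the multiaffine polynomial `f = Σ_S c_S z^S`. -/
theorem correlation_row_norm_bound_of_sector_stable
    (n : ℕ) (α : ℝ) (hα0 : 0 < α) (hα1 : α ≤ 1)
    (c : Finset (Fin n) → ℝ) (hc : ∀ S, 0 ≤ c S)
    (hpos : 0 < ∑ S : Finset (Fin n), c S)
    (hstable : ∀ z : Fin n → ℂ, (∀ i, inSector α (z i)) →
      (∑ S : Finset (Fin n), (c S : ℂ) * ∏ i ∈ S, z i) ≠ 0)
    (i : Fin n)
    (hPi0 : 0 < (∑ S ∈ univ.filter (fun S : Finset (Fin n) => i ∈ S), c S) /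
      (∑ S : Finset (Fin n), c S)) :
    (1 - (∑ S ∈ univ.filter (fun S : Finset (Fin n) => i ∈ S), c S) /
        (∑ S : Finset (Fin n), c S)) +
      ∑ j ∈ univ.erase i,
        |(∑ S ∈ univ.filter (fun S : Finset (Fin n) => i ∈ S ∧ j ∈ S), c S) /
            (∑ S ∈ univ.filter (fun S : Finset (Fin n) => i ∈ S), c S) -
          (∑ S ∈ univ.filter (fun S : Finset (Fin n) => j ∈ S), c S) /
            (∑ S : Finset (Fin n), c S)|
      ≤ 2 / α :=
  (correlation_row_norm_bound_of_sector_stable_general hα0 (by linarith) hstable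
    (div_ne_zero_iff.1 hPi0.ne').1).trans (mul_le_of_le_one_right (by positivity) (by linarith))
end

section
/- Let A ∈ ℝ^{n×n} be such that A + Aᵀ is positive semidefinite, and let 0 ≤ k ≤ n. Then both f_k(z₁,…,zₙ) = Σ_{S ⊆ [n], |S| = k} det(A_{S,S}) · Π_{i ∉ S} z_i and its dual f_k*(z₁,…,zₙ) = Σ_{S ⊆ [n], |S| = k} det(A_{S,S}) · Π_{i ∈ S} z_i have nonnegative coefficients, and each is either identically 0 or Γ_{1/2}-stable. -/
open Finset Matrix

/-- The determinant of the principal submatrix `A_{S,S}` (with `det(A_{∅,∅}) = 1`). -/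
noncomputable def principalMinor {n : ℕ} (A : Matrix (Fin n) (Fin n) ℝ)
    (S : Finset (Fin n)) : ℝ :=
  (A.submatrix (fun x : {i // i ∈ S} => (x : Fin n)) (fun x : {i // i ∈ S} => (x : Fin n))).det

/-- `f_k(z) = Σ_{|S| = k} det(A_{S,S}) Π_{i ∉ S} z_i`, as a function on `ℂⁿ`. -/
noncomputable def minorPolyCard {n : ℕ} (A : Matrix (Fin n) (Fin n) ℝ) (k : ℕ)
    (z : Fin n → ℂ) : ℂ :=
  ∑ S ∈ univ.filter (fun S : Finset (Fin n) => S.card = k),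
    (principalMinor A S : ℂ) * ∏ i ∈ Sᶜ, z i

/-- The dual `f_k*(z) = Σ_{|S| = k} det(A_{S,S}) Π_{i ∈ S} z_i`, as a function on `ℂⁿ`. -/
noncomputable def minorPolyCardDual {n : ℕ} (A : Matrix (Fin n) (Fin n) ℝ) (k : ℕ)
    (z : Fin n → ℂ) : ℂ :=
  ∑ S ∈ univ.filter (fun S : Finset (Fin n) => S.card = k),
    (principalMinor A S : ℂ) * ∏ i ∈ S, z i

/-!
Suppose first that `A + Aᵀ` is positive definite, and write `f_k*` for the dual polynomials.
For `z` in the sector, `P(t) = det (1 + t diag(z) A) = ∑ k, f_k*(z) t ^ k` satisfies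
`|P(-t)| < |P(t)|` whenever all `t z_i` have positive real part, in particular whenever `t` lies
in the closed sector `Γ_{1/2}`: with `u_i = (t z_i)⁻¹`, the polynomial
`s ↦ det (s Re u + i Im u + A)` has all its roots in the open left half-plane, and since `A` is
real its values at `s = 1` and `s = -1` have norms `|det (u + A)|` and `|det (u - A)|`. Hence the
even and the odd part of `P`, as polynomials in `t ^ 2`, have no zero in the closed right
half-plane, and by Gauss–Lucas none of their coefficients up to the degree vanishes. Both degrees
are as large as possible because `f_n*` and `f_{n-1}*` do not vanish at `z`.

In the semidefinite case, perturb `A` to `A + ε`. A polynomial with no root within distance `ρ` of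
`z` has at `w` at most a constant times its size at `z`, where the constant depends only on `ρ`,
the degree and `|w - z|`. Applied along a complex line this bound passes to the limit `ε → 0`, so
a single zero of `f_k*` in the sector forces `f_k* = 0`. Finally, `f_k` is the reflection of `f_k*`
under `z ↦ z⁻¹`.
-/

section Accretive

open scoped ComplexOrder

theorem posDef_add_smul_one {ι : Type*} [DecidableEq ι] {A : Matrix ι ι ℝ}
    (hA : (A + Aᵀ).PosSemidef) {ε : ℝ} (hε : 0 < ε) :
    ((A + ε • 1) + (A + ε • 1)ᵀ).PosDef := by
  have hsum : (A + ε • 1) + (A + ε • 1)ᵀ = (2 * ε) • 1 + (A + Aᵀ) := by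
    rw [transpose_add, transpose_smul, transpose_one]
    module
  rw [hsum]
  exact (PosDef.one.smul (by positivity)).add_posSemidef hA

open scoped MatrixOrder in
theorem posDef_map_ofReal {ι : Type*} [Finite ι] {A : Matrix ι ι ℝ} (hA : A.PosDef) :
    (A.map Complex.ofReal).PosDef := by
  classical
  have := Fintype.ofFinite ι
  have hsemi : (A.map Complex.ofReal).PosSemidef := by
    obtain ⟨B, rfl⟩ := CStarAlgebra.nonneg_iff_eq_star_mul_self.1 hA.posSemidef.nonneg
    have hmap : (star B * B).map Complex.ofReal =
        (B.map Complex.ofReal)ᴴ * B.map Complex.ofReal := by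
      ext i j
      simp [mul_apply, star_apply]
    exact hmap ▸ posSemidef_conjTranspose_mul_self _
  refine hsemi.posDef_iff_det_ne_zero.2 ?_
  have hdet : (A.map Complex.ofReal).det = (A.det : ℂ) := (Complex.ofRealHom.map_det A).symm
  rw [hdet]
  exact_mod_cast hA.det_pos.ne'

variable {ι : Type*} [Fintype ι] [DecidableEq ι]

theorem det_ne_zero_of_posDef_add_conjTranspose {R : Type*} [CommRing R] [IsDomain R]
    [PartialOrder R] [StarRing R] {M : Matrix ι ι R} (hM : (M + Mᴴ).PosDef) : M.det ≠ 0 := by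
  intro hdet
  obtain ⟨v, hv, hMv⟩ := exists_mulVec_eq_zero_iff.2 hdet
  have hpos := hM.dotProduct_mulVec_pos hv
  rw [add_mulVec, hMv, zero_add, dotProduct_mulVec, ← star_mulVec, hMv, star_zero,
    zero_dotProduct] at hpos
  exact hpos.false

theorem det_pos_of_posDef_add_transpose {A : Matrix ι ι ℝ} (hA : (A + Aᵀ).PosDef) :
    0 < A.det := by
  let path : ℝ → Matrix ι ι ℝ := fun t => (1 - t) • 1 + t • A
  have hcont : Continuous fun t => (path t).det := by fun_prop
  have hpath : ∀ t ∈ Set.Icc (0 : ℝ) 1, (path t).det ≠ 0 := by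
    rintro t ⟨ht0, ht1⟩
    rcases ht0.eq_or_lt with rfl | htpos
    · simp [path]
    refine det_ne_zero_of_posDef_add_conjTranspose ?_
    have hsum : path t + (path t)ᴴ = (2 * (1 - t)) • 1 + t • (A + Aᵀ) := by
      simp only [path, conjTranspose_eq_transpose_of_trivial, transpose_add, transpose_smul,
        transpose_one]
      module
    rw [hsum]
    exact .posSemidef_add (PosSemidef.one.smul (by linarith)) (hA.smul htpos)
  by_contra! hneg
  obtain ⟨t, ht, hdet⟩ := intermediate_value_Icc' zero_le_one hcont.continuousOn
    (show (0 : ℝ) ∈ Set.Icc (path 1).det (path 0).det by simpa [path] using hneg)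
  exact hpath t ht hdet

end Accretive

section RootLocation

open Polynomial ComplexConjugate

theorem norm_eval_eq_norm_leadingCoeff_mul_prod_roots (p : ℂ[X]) (x : ℂ) :
    ‖p.eval x‖ = ‖p.leadingCoeff‖ * (p.roots.map fun r => ‖x - r‖).prod := by
  rw [(IsAlgClosed.splits p).eval_eq_prod_roots, norm_mul, ← normHom_apply (Multiset.prod _),
    map_multiset_prod, Multiset.map_map]
  rfl

theorem norm_eval_neg_conj_lt_norm_eval {p : ℂ[X]} (hdeg : p.natDegree ≠ 0)
    (hroots : ∀ r, p.IsRoot r → r.re < 0) {s : ℂ} (hs : 0 < s.re) :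
    ‖p.eval (-conj s)‖ < ‖p.eval s‖ := by
  by_cases hconj : p.eval (-conj s) = 0
  · simpa [hconj] using fun h => (hroots s h).not_gt hs
  have hp : p ≠ 0 := ne_zero_of_natDegree_gt hdeg.pos
  have hcard : p.roots ≠ 0 := by
    rwa [← Multiset.card_eq_zero.ne, ← (IsAlgClosed.splits p).natDegree_eq_card_roots]
  simp only [norm_eval_eq_norm_leadingCoeff_mul_prod_roots p]
  refine mul_lt_mul_of_pos_left (Multiset.prod_map_lt_prod_map hcard _ _ ?_ ?_)
    (norm_pos_iff.2 <| leadingCoeff_ne_zero.2 hp)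
  · intro r hr
    refine norm_pos_iff.2 (sub_ne_zero.2 ?_)
    rintro rfl
    exact hconj (isRoot_of_mem_roots hr)
  · intro r hr
    have hr_re := hroots r (isRoot_of_mem_roots hr)
    rw [← sq_lt_sq₀ (norm_nonneg _) (norm_nonneg _), Complex.sq_norm, Complex.sq_norm,
      Complex.normSq_apply, Complex.normSq_apply]
    simp only [Complex.sub_re, Complex.sub_im, Complex.neg_re, Complex.neg_im, Complex.conj_re,
      Complex.conj_im, neg_neg]
    nlinarith [mul_pos hs (neg_pos.2 hr_re)]

theorem norm_eval_le_mul_norm_eval {p : ℂ[X]} {z : ℂ} {ρ : ℝ} (hρ : 0 < ρ)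
    (hroots : ∀ r, p.IsRoot r → ρ ≤ ‖z - r‖) (w : ℂ) :
    ‖p.eval w‖ ≤ (1 + ‖w - z‖ / ρ) ^ p.natDegree * ‖p.eval z‖ := by
  have hfactor : ∀ r ∈ p.roots, ‖w - r‖ ≤ (1 + ‖w - z‖ / ρ) * ‖z - r‖ := by
    intro r hr
    have hdist : ‖w - z‖ ≤ ‖w - z‖ / ρ * ‖z - r‖ := by
      rw [div_mul_eq_mul_div, le_div_iff₀ hρ]
      gcongr
      exact hroots r (isRoot_of_mem_roots hr)
    linarith [norm_sub_le_norm_sub_add_norm_sub w z r]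
  calc ‖p.eval w‖ = ‖p.leadingCoeff‖ * (p.roots.map fun r => ‖w - r‖).prod :=
        norm_eval_eq_norm_leadingCoeff_mul_prod_roots p w
    _ ≤ ‖p.leadingCoeff‖ * (p.roots.map fun r => (1 + ‖w - z‖ / ρ) * ‖z - r‖).prod := by
        gcongr
        exact Multiset.prod_map_le_prod_map₀ _ _ (fun _ _ => norm_nonneg _) hfactor
    _ = (1 + ‖w - z‖ / ρ) ^ p.natDegree * ‖p.eval z‖ := by
        rw [Multiset.prod_map_mul, Multiset.map_const', Multiset.prod_replicate,
          ← (IsAlgClosed.splits p).natDegree_eq_card_roots,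
          norm_eval_eq_norm_leadingCoeff_mul_prod_roots p z]
        ring

theorem coeff_ne_zero_of_isRoot_re_neg {Q : ℂ[X]} (hQ : ∀ w, Q.IsRoot w → w.re < 0) {j : ℕ}
    (hj : j ≤ Q.natDegree) : Q.coeff j ≠ 0 := by
  -- By Gauss–Lucas the derivatives of `Q` inherit the half-plane, so none of them vanishes at `0`.
  induction j generalizing Q with
  | zero =>
    intro h
    rw [coeff_zero_eq_eval_zero] at h
    exact (hQ 0 h).false
  | succ j ih =>
    have hdeg : 0 < Q.degree := natDegree_pos_iff_degree_pos.1 (by lia)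
    have hderiv : ∀ w, (derivative Q).IsRoot w → w.re < 0 := by
      intro w hw
      have hne : derivative Q ≠ 0 := derivative_eq_zero.not.2 (by lia)
      have hhull : convexHull ℝ (Q.rootSet ℂ) ⊆ {c : ℂ | c.re < 0} := by
        refine convexHull_min (fun c hc => hQ c ?_) (convex_halfSpace_re_lt 0)
        simpa using (mem_rootSet.1 hc).2
      exact hhull (rootSet_derivative_subset_convexHull_rootSet hdeg
        (mem_rootSet.2 ⟨hne, by simpa using hw⟩))
    have hcoeff := ih hderiv (by rw [natDegree_derivative]; lia)
    rw [coeff_derivative] at hcoeff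
    exact left_ne_zero_of_mul hcoeff

theorem exists_sq_eq_of_re_nonneg {w : ℂ} (hw : w ≠ 0) (hre : 0 ≤ w.re) :
    ∃ t : ℂ, t ^ 2 = w ∧ 0 < t.re := by
  obtain ⟨t, rfl⟩ := IsAlgClosed.exists_pow_nat_eq w zero_lt_two
  have ht : t.re ≠ 0 := by
    intro h
    have him : t.im = 0 := by
      simp only [sq, Complex.mul_re, h] at hre
      nlinarith
    exact hw (by simp [Complex.ext_iff, h, him, sq])
  rcases ht.lt_or_gt with hneg | hpos
  · exact ⟨-t, neg_sq t, by simpa using hneg⟩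
  · exact ⟨t, rfl, hpos⟩

theorem coeff_ne_zero_of_eval_sq_ne_zero {Q : ℂ[X]} (hQ0 : Q.coeff 0 ≠ 0)
    (hQ : ∀ t : ℂ, 0 < t.re → 0 ≤ (t ^ 2).re → Q.eval (t ^ 2) ≠ 0) {j m : ℕ} (hjm : j ≤ m)
    (hm : Q.coeff m ≠ 0) : Q.coeff j ≠ 0 := by
  refine coeff_ne_zero_of_isRoot_re_neg (fun w hw => ?_) (hjm.trans (le_natDegree_of_ne_zero hm))
  by_contra! hre
  rcases eq_or_ne w 0 with rfl | hw0
  · exact hQ0 (by rwa [coeff_zero_eq_eval_zero])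
  · obtain ⟨t, rfl, ht⟩ := exists_sq_eq_of_re_nonneg hw0 hre
    exact hQ t ht hre hw

theorem eval_add_eval_neg {R : Type*} [CommRing R] (P : R[X]) (t : R) :
    P.eval t + P.eval (-t) = 2 * (contract 2 P).eval (t ^ 2) := by
  have hcoeff : P + P.comp (C (-1) * X) = C 2 * expand R 2 (contract 2 P) := by
    ext m
    rw [coeff_add, comp_C_mul_X_coeff, coeff_C_mul, coeff_expand zero_lt_two]
    split_ifs with h
    · rw [coeff_contract two_ne_zero, Nat.div_mul_cancel h, (even_iff_two_dvd.2 h).neg_one_pow]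
      ring
    · rw [(Nat.not_even_iff_odd.1 (even_iff_two_dvd.not.2 h)).neg_one_pow]
      ring
  simpa [expand_eval] using congrArg (eval t) hcoeff

theorem eval_sub_eval_neg {R : Type*} [CommRing R] (P : R[X]) (t : R) :
    P.eval t - P.eval (-t) = 2 * t * (contract 2 P.divX).eval (t ^ 2) := by
  have heval : ∀ x, P.eval x = x * P.divX.eval x + P.coeff 0 := fun x => by
    conv_lhs => rw [← X_mul_divX_add P]
    simp only [eval_add, eval_mul, eval_X, eval_C]
  linear_combination heval t - heval (-t) + t * eval_add_eval_neg P.divX t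

theorem coeff_ne_zero_of_norm_eval_neg_lt {P : ℂ[X]}
    (hP : ∀ t : ℂ, 0 < t.re → 0 ≤ (t ^ 2).re → ‖P.eval (-t)‖ < ‖P.eval t‖) {k m : ℕ}
    (hlow : P.coeff (k % 2) ≠ 0) (hkm : k ≤ m) (hparity : k ≡ m [MOD 2])
    (hm : P.coeff m ≠ 0) : P.coeff k ≠ 0 := by
  rcases Nat.even_or_odd' k with ⟨j, rfl | rfl⟩
  · obtain ⟨l, rfl⟩ : ∃ l, m = 2 * l := ⟨m / 2, by rw [Nat.ModEq] at hparity; lia⟩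
    have hcoeff : ∀ i, (contract 2 P).coeff i = P.coeff (2 * i) := fun i => by
      rw [coeff_contract two_ne_zero, mul_comm]
    rw [← hcoeff] at hm ⊢
    refine coeff_ne_zero_of_eval_sq_ne_zero (by simpa [hcoeff] using hlow) ?_ (by lia) hm
    intro t ht hsq h0
    have hsum := eval_add_eval_neg P t
    rw [h0, mul_zero] at hsum
    exact (hP t ht hsq).ne' (by rw [eq_neg_of_add_eq_zero_left hsum, norm_neg])
  · obtain ⟨l, rfl⟩ : ∃ l, m = 2 * l + 1 := ⟨m / 2, by rw [Nat.ModEq] at hparity; lia⟩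
    have hcoeff : ∀ i, (contract 2 P.divX).coeff i = P.coeff (2 * i + 1) := fun i => by
      rw [coeff_contract two_ne_zero, coeff_divX, mul_comm]
    rw [← hcoeff] at hm ⊢
    refine coeff_ne_zero_of_eval_sq_ne_zero (by simpa [hcoeff, Nat.add_mod] using hlow) ?_
      (by lia) hm
    intro t ht hsq h0
    have hdiff := eval_sub_eval_neg P t
    rw [h0, mul_zero] at hdiff
    exact (hP t ht hsq).ne' (by rw [sub_eq_zero.1 hdiff])

end RootLocation

section DeterminantInequality

open Polynomial ComplexConjugate
open scoped ComplexOrder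

variable {ι : Type*} [Fintype ι] [DecidableEq ι]

theorem eval_det_X_smul_add_C {R : Type*} [CommRing R] (D B : Matrix ι ι R) (s : R) :
    ((X : R[X]) • D.map C + B.map C).det.eval s = (s • D + B).det := by
  rw [← coe_evalRingHom, RingHom.map_det]
  congr 1
  ext i j
  simp [mul_comm (D i j)]

theorem norm_det_sub_lt_norm_det_add [Nonempty ι] {D B : Matrix ι ι ℂ} (hD : D.det ≠ 0)
    (hDB : ∀ s : ℂ, 0 ≤ s.re → (s • D + B).det ≠ 0) : ‖(D - B).det‖ < ‖(D + B).det‖ := by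
  set p := ((X : ℂ[X]) • D.map C + B.map C).det with hp
  have hdeg : p.natDegree ≠ 0 := by
    have hcard : Fintype.card ι ≤ p.natDegree :=
      le_natDegree_of_ne_zero (by rwa [hp, coeff_det_X_add_C_card])
    exact (Fintype.card_pos.trans_le hcard).ne'
  have hroots : ∀ r, p.IsRoot r → r.re < 0 := fun r hr => by
    by_contra! hre
    exact hDB r hre (by rwa [← eval_det_X_smul_add_C])
  have hlt := norm_eval_neg_conj_lt_norm_eval hdeg hroots (s := 1) (by simp)
  have hneg : (-1 : ℂ) • D + B = -(D - B) := by module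
  rwa [eval_det_X_smul_add_C, eval_det_X_smul_add_C, map_one, one_smul, hneg, det_neg, norm_mul,
    norm_pow, norm_neg, norm_one, one_pow, one_mul] at hlt

theorem norm_det_diagonal_sub_lt_norm_det_diagonal_add [Nonempty ι] {A : Matrix ι ι ℝ}
    (hA : (A + Aᵀ).PosDef) {u : ι → ℂ} (hu : ∀ i, 0 < (u i).re) :
    ‖(diagonal u - A.map Complex.ofReal).det‖ < ‖(diagonal u + A.map Complex.ofReal).det‖ := by
  let D : Matrix ι ι ℂ := diagonal fun i => ((u i).re : ℂ)
  let B : Matrix ι ι ℂ := diagonal (fun i => (u i).im * Complex.I) + A.map Complex.ofReal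
  have hD : D.det ≠ 0 := by
    rw [det_diagonal]
    exact prod_ne_zero_iff.2 fun i _ => by exact_mod_cast (hu i).ne'
  have hDpos : D.PosSemidef := .diagonal fun i => Complex.zero_le_real.2 (hu i).le
  have hB : B + Bᴴ = (A + Aᵀ).map Complex.ofReal := by
    ext i j
    rcases eq_or_ne i j with rfl | hij
    · simp [B, add_add_add_comm _ (A i i : ℂ)]
    · simp [B, hij]
  have hDB : ∀ s : ℂ, 0 ≤ s.re → (s • D + B).det ≠ 0 := fun s hs => by
    refine det_ne_zero_of_posDef_add_conjTranspose ?_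
    have hherm : s • D + B + (s • D + B)ᴴ =
        ((2 * s.re : ℝ) : ℂ) • D + (A + Aᵀ).map Complex.ofReal := by
      rw [conjTranspose_add, conjTranspose_smul, hDpos.isHermitian.eq, ← hB, ← Complex.add_conj,
        add_smul]
      exact add_add_add_comm _ _ _ _
    rw [hherm]
    exact .posSemidef_add (hDpos.smul (Complex.zero_le_real.2 (by positivity)))
      (posDef_map_ofReal hA)
  have hadd : diagonal u + A.map Complex.ofReal = D + B := by
    ext i j
    rcases eq_or_ne i j with rfl | hij <;> simp [D, B, *, ← add_assoc, Complex.re_add_im]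
  -- Conjugation fixes the real matrix `A` and preserves the norm of the determinant.
  have hsub : (diagonal u - A.map Complex.ofReal).map conj = D - B := by
    ext i j
    rcases eq_or_ne i j with rfl | hij <;> simp [D, B, Complex.ext_iff, *]
  rw [hadd, ← Complex.norm_conj, RingHom.map_det, RingHom.mapMatrix_apply, hsub]
  exact norm_det_sub_lt_norm_det_add hD hDB

theorem norm_det_one_sub_diagonal_mul_lt [Nonempty ι] {A : Matrix ι ι ℝ} (hA : (A + Aᵀ).PosDef)
    {w : ι → ℂ} (hw : ∀ i, 0 < (w i).re) :
    ‖(1 - diagonal w * A.map Complex.ofReal).det‖ <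
      ‖(1 + diagonal w * A.map Complex.ofReal).det‖ := by
  have hw0 : ∀ i, w i ≠ 0 := fun i h => by simpa [h] using hw i
  have hinv : diagonal w * diagonal w⁻¹ = 1 := by
    simp [diagonal_mul_diagonal, hw0]
  have hre : ∀ i, 0 < (w⁻¹ i).re := fun i => by
    rw [Pi.inv_apply, Complex.inv_re]
    exact div_pos (hw i) (Complex.normSq_pos.2 (hw0 i))
  rw [← hinv, ← mul_sub, ← mul_add, det_mul, det_mul, norm_mul, norm_mul]
  refine mul_lt_mul_of_pos_left (norm_det_diagonal_sub_lt_norm_det_diagonal_add hA hre) ?_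
  rw [det_diagonal]
  exact norm_pos_iff.2 (prod_ne_zero_iff.2 fun i _ => hw0 i)

end DeterminantInequality

section Sector

theorem inSector.inv {α : ℝ} {z : ℂ} (hz : inSector α z) : inSector α z⁻¹ :=
  ⟨inv_ne_zero hz.1, by rw [Complex.abs_arg_inv]; exact hz.2⟩

theorem inSector.eventually {α : ℝ} (hα : α ≤ 2) {z : ℂ} (hz : inSector α z) :
    ∀ᶠ w in nhds z, inSector α w := by
  have hslit : z ∈ Complex.slitPlane := by
    refine Complex.mem_slitPlane_iff_arg.2 ⟨fun harg => ?_, hz.1⟩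
    have := hz.2
    rw [harg, abs_of_pos Real.pi_pos] at this
    nlinarith [Real.pi_pos]
  have harg : ContinuousAt (fun w : ℂ => |w.arg|) z := (Complex.continuousAt_arg hslit).abs
  exact (eventually_ne_nhds hz.1).and (harg.eventually_lt continuousAt_const hz.2)

theorem inSector.re_pos {α : ℝ} (hα : α ≤ 1) {z : ℂ} (hz : inSector α z) : 0 < z.re := by
  refine (Complex.abs_arg_lt_pi_div_two_iff.1 (hz.2.trans_le ?_)).resolve_right hz.1
  gcongr
  nlinarith [Real.pi_pos]

theorem inSector.re_sq_pos {α : ℝ} (hα : α ≤ 1 / 2) {z : ℂ} (hz : inSector α z) :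
    0 < (z ^ 2).re := by
  have hcos : 0 < Real.cos (2 * z.arg) := by
    have harg : |2 * z.arg| < Real.pi / 2 := by
      rw [abs_mul, abs_two]
      nlinarith [hz.2, Real.pi_pos]
    exact Real.cos_pos_of_mem_Ioo (abs_lt.1 harg)
  have hre : (z ^ 2).re = ‖z‖ ^ 2 * Real.cos (2 * z.arg) := by
    rw [Real.cos_two_mul', mul_sub, ← mul_pow, ← mul_pow, Complex.norm_mul_cos_arg,
      Complex.norm_mul_sin_arg, sq z, Complex.mul_re]
    ring
  rw [hre]
  exact mul_pos (pow_pos (norm_pos_iff.2 hz.1) 2) hcos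

theorem re_mul_pos_of_re_sq_nonneg {t z : ℂ} (ht : 0 < t.re) (ht2 : 0 ≤ (t ^ 2).re)
    (hz : 0 < z.re) (hz2 : 0 < (z ^ 2).re) : 0 < (t * z).re := by
  simp only [sq, Complex.mul_re, sub_nonneg, sub_pos] at ht2 hz2 ⊢
  have hsq : (t.im * z.im) ^ 2 < (t.re * z.re) ^ 2 := by
    nlinarith [mul_lt_mul_of_pos_left hz2 (mul_pos ht ht),
      mul_le_mul_of_nonneg_right ht2 (mul_self_nonneg z.im)]
  exact (abs_lt_of_sq_lt_sq hsq (by positivity)).trans_le' (le_abs_self _)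

end Sector

section ReflectionAndExtremeDegrees

variable {n : ℕ} {A : Matrix (Fin n) (Fin n) ℝ} {k : ℕ} {z : Fin n → ℂ}

theorem minorPolyCard_eq_zero_of_principalMinor_eq_zero
    (h : ∀ S : Finset (Fin n), S.card = k → principalMinor A S = 0) (z : Fin n → ℂ) :
    minorPolyCard A k z = 0 :=
  sum_eq_zero fun S hS => by simp [h S (mem_filter.1 hS).2]

theorem minorPolyCardDual_eq_zero_of_principalMinor_eq_zero
    (h : ∀ S : Finset (Fin n), S.card = k → principalMinor A S = 0) (z : Fin n → ℂ) :
    minorPolyCardDual A k z = 0 :=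
  sum_eq_zero fun S hS => by simp [h S (mem_filter.1 hS).2]

theorem minorPolyCardDual_eq_prod_mul_minorPolyCard_inv (A : Matrix (Fin n) (Fin n) ℝ) (k : ℕ)
    (hz : ∀ i, z i ≠ 0) :
    minorPolyCardDual A k z = (∏ i, z i) * minorPolyCard A k z⁻¹ := by
  rw [minorPolyCard, mul_sum]
  refine sum_congr rfl fun S _ => ?_
  have hne : ∏ i ∈ Sᶜ, z i ≠ 0 := prod_ne_zero_iff.2 fun i _ => hz i
  simp only [← prod_mul_prod_compl S z, Pi.inv_apply, prod_inv_distrib]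
  field_simp

theorem minorPolyCard_eq_prod_mul_minorPolyCardDual_inv (A : Matrix (Fin n) (Fin n) ℝ) (k : ℕ)
    (hz : ∀ i, z i ≠ 0) :
    minorPolyCard A k z = (∏ i, z i) * minorPolyCardDual A k z⁻¹ := by
  rw [minorPolyCardDual_eq_prod_mul_minorPolyCard_inv A k (z := z⁻¹) fun i => inv_ne_zero (hz i),
    inv_inv, ← mul_assoc, ← prod_mul_distrib,
    (prod_eq_one fun i _ => mul_inv_cancel₀ (hz i) : ∏ i, z i * z⁻¹ i = 1), one_mul]

theorem sum_ofReal_mul_prod_ne_zero {ι κ : Type*} {F : Finset κ} (hF : F.Nonempty) {c : κ → ℝ}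
    (hc : ∀ S ∈ F, 0 < c S) {T : κ → Finset ι} (hT : ∀ S ∈ F, (T S).card ≤ 1) {w : ι → ℂ}
    (hw : ∀ i, 0 < (w i).re) : ∑ S ∈ F, (c S : ℂ) * ∏ i ∈ T S, w i ≠ 0 := by
  have hprod : ∀ S ∈ F, 0 < (∏ i ∈ T S, w i).re := fun S hS => by
    rcases Nat.le_one_iff_eq_zero_or_eq_one.1 (hT S hS) with hzero | hone
    · simp [card_eq_zero.1 hzero]
    · obtain ⟨i, hi⟩ := card_eq_one.1 hone
      simpa [hi] using hw i
  have hsum : 0 < (∑ S ∈ F, (c S : ℂ) * ∏ i ∈ T S, w i).re := by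
    simp only [Complex.re_sum, Complex.re_ofReal_mul]
    exact sum_pos (fun S hS => mul_pos (hc S hS) (hprod S hS)) hF
  exact fun h => hsum.ne' (by rw [h, Complex.zero_re])

theorem filter_card_eq_nonempty (hk : k ≤ n) :
    (univ.filter fun S : Finset (Fin n) => S.card = k).Nonempty := by
  obtain ⟨S, -, hS⟩ := exists_subset_card_eq (s := (univ : Finset (Fin n))) (by simpa using hk)
  exact ⟨S, by simpa using hS⟩

theorem principalMinor_pos (hA : (A + Aᵀ).PosDef) (S : Finset (Fin n)) :
    0 < principalMinor A S :=
  det_pos_of_posDef_add_transpose (hA.submatrix Subtype.val_injective)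

theorem minorPolyCardDual_ne_zero_of_le_one (hA : (A + Aᵀ).PosDef) (hkn : k ≤ n) (hk : k ≤ 1)
    (hz : ∀ i, 0 < (z i).re) : minorPolyCardDual A k z ≠ 0 :=
  sum_ofReal_mul_prod_ne_zero (filter_card_eq_nonempty hkn) (fun S _ => principalMinor_pos hA S)
    (fun S hS => by rwa [(mem_filter.1 hS).2]) hz

theorem minorPolyCardDual_ne_zero_of_le_add_one (hA : (A + Aᵀ).PosDef) (hkn : k ≤ n)
    (hk : n ≤ k + 1) (hz : ∀ i, 0 < (z i).re) : minorPolyCardDual A k z ≠ 0 := by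
  have hz0 : ∀ i, z i ≠ 0 := fun i h => by simpa [h] using hz i
  rw [minorPolyCardDual_eq_prod_mul_minorPolyCard_inv A k hz0]
  refine mul_ne_zero (prod_ne_zero_iff.2 fun i _ => hz0 i) ?_
  refine sum_ofReal_mul_prod_ne_zero (filter_card_eq_nonempty hkn)
    (fun S _ => principalMinor_pos hA S) (fun S hS => ?_) fun i => ?_
  · rw [card_compl, (mem_filter.1 hS).2, Fintype.card_fin]
    lia
  · rw [Pi.inv_apply, Complex.inv_re]
    exact div_pos (hz i) (Complex.normSq_pos.2 (hz0 i))

end ReflectionAndExtremeDegrees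

section GeneratingPolynomial

open Polynomial

variable {n : ℕ} {A : Matrix (Fin n) (Fin n) ℝ} {k : ℕ} {z : Fin n → ℂ}

/-- The generating polynomial `det (1 + X · diag(z) · A) = Σ_k f_k*(z) X^k` of the values at `z`
of the dual polynomials. -/
noncomputable def minorGenPoly (A : Matrix (Fin n) (Fin n) ℝ) (z : Fin n → ℂ) : ℂ[X] :=
  (1 + (X : ℂ[X]) • (diagonal z * A.map Complex.ofReal).map C).det

theorem coeff_minorGenPoly (A : Matrix (Fin n) (Fin n) ℝ) (z : Fin n → ℂ) (k : ℕ) :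
    (minorGenPoly A z).coeff k = minorPolyCardDual A k z := by
  rw [minorGenPoly, coeff_det_one_add_X_smul_eq_sum_minors]
  refine sum_congr (by ext S; simp [mem_powersetCard]) fun S _ => ?_
  have hsub : (diagonal z * A.map Complex.ofReal).submatrix
      (Subtype.val : S → Fin n) (Subtype.val : S → Fin n) =
        diagonal (fun i : S => z i) * (A.submatrix Subtype.val Subtype.val).map Complex.ofReal := by
    ext i j
    simp [diagonal_mul]
  rw [hsub, det_mul, det_diagonal, mul_comm, prod_coe_sort S z]
  congr 1
  exact (Complex.ofRealHom.map_det _).symm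

theorem eval_minorGenPoly (A : Matrix (Fin n) (Fin n) ℝ) (z : Fin n → ℂ) (t : ℂ) :
    (minorGenPoly A z).eval t = (1 + diagonal (t • z) * A.map Complex.ofReal).det := by
  have hone : (1 : Matrix (Fin n) (Fin n) ℂ[X]) = (1 : Matrix (Fin n) (Fin n) ℂ).map C := by
    simp
  rw [minorGenPoly, hone, add_comm, eval_det_X_smul_add_C, add_comm, diagonal_smul, smul_mul]

theorem norm_eval_neg_minorGenPoly_lt [NeZero n] (hA : (A + Aᵀ).PosDef)
    (hz : ∀ i, inSector (1 / 2) (z i)) {t : ℂ} (ht : 0 < t.re) (ht2 : 0 ≤ (t ^ 2).re) :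
    ‖(minorGenPoly A z).eval (-t)‖ < ‖(minorGenPoly A z).eval t‖ := by
  have htz : ∀ i, 0 < ((t • z) i).re := fun i =>
    re_mul_pos_of_re_sq_nonneg ht ht2 ((hz i).re_pos (by norm_num)) ((hz i).re_sq_pos le_rfl)
  rw [eval_minorGenPoly, eval_minorGenPoly, neg_smul]
  have hneg : diagonal (-(t • z)) = -diagonal (t • z) := (diagonal_neg _).symm
  rw [hneg, neg_mul, ← sub_eq_add_neg]
  exact norm_det_one_sub_diagonal_mul_lt hA htz

theorem minorPolyCardDual_ne_zero_of_posDef (hA : (A + Aᵀ).PosDef) (hk : k ≤ n)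
    (hz : ∀ i, inSector (1 / 2) (z i)) : minorPolyCardDual A k z ≠ 0 := by
  have hre : ∀ i, 0 < (z i).re := fun i => (hz i).re_pos (by norm_num)
  rcases eq_or_ne n 0 with rfl | hn
  · exact minorPolyCardDual_ne_zero_of_le_one hA hk (by lia) hre
  have : NeZero n := ⟨hn⟩
  -- The largest degree `m ≤ n` of the same parity as `k` is `n` or `n - 1`.
  obtain ⟨m, hkm, hmn, hnm, hparity⟩ : ∃ m, k ≤ m ∧ m ≤ n ∧ n ≤ m + 1 ∧ k ≡ m [MOD 2] :=
    ⟨n - (n - k) % 2, by lia, by lia, by lia, by rw [Nat.ModEq]; lia⟩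
  rw [← coeff_minorGenPoly]
  refine coeff_ne_zero_of_norm_eval_neg_lt
    (fun t ht ht2 => norm_eval_neg_minorGenPoly_lt hA hz ht ht2) ?_ hkm hparity ?_
  · rw [coeff_minorGenPoly]
    exact minorPolyCardDual_ne_zero_of_le_one hA (by lia) (by lia) hre
  · rw [coeff_minorGenPoly]
    exact minorPolyCardDual_ne_zero_of_le_add_one hA hmn hnm hre

end GeneratingPolynomial

section Perturbation

open Filter Topology

variable {n : ℕ} {A : Matrix (Fin n) (Fin n) ℝ} {k : ℕ} {z : Fin n → ℂ}

theorem tendsto_principalMinor_add_smul_one (A : Matrix (Fin n) (Fin n) ℝ)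
    (S : Finset (Fin n)) :
    Tendsto (fun ε : ℝ => principalMinor (A + ε • 1) S) (𝓝[>] 0) (𝓝 (principalMinor A S)) := by
  have hcont : Continuous fun ε : ℝ => principalMinor (A + ε • 1) S := by
    refine Continuous.matrix_det (Continuous.matrix_submatrix ?_ _ _)
    fun_prop
  simpa using (hcont.tendsto 0).mono_left nhdsWithin_le_nhds

theorem tendsto_minorPolyCardDual_add_smul_one (A : Matrix (Fin n) (Fin n) ℝ) (k : ℕ)
    (z : Fin n → ℂ) :
    Tendsto (fun ε : ℝ => minorPolyCardDual (A + ε • 1) k z) (𝓝[>] 0)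
      (𝓝 (minorPolyCardDual A k z)) :=
  tendsto_finsetSum _ fun S _ =>
    ((Complex.continuous_ofReal.tendsto _).comp
      (tendsto_principalMinor_add_smul_one A S)).mul_const _

theorem principalMinor_nonneg (hA : (A + Aᵀ).PosSemidef) (S : Finset (Fin n)) :
    0 ≤ principalMinor A S := by
  refine ge_of_tendsto (tendsto_principalMinor_add_smul_one A S) ?_
  filter_upwards [self_mem_nhdsWithin] with ε hε
  exact (principalMinor_pos (posDef_add_smul_one hA hε) S).le

open Polynomial in
theorem exists_polynomial_eval_eq_minorPolyCardDual_lineMap (A : Matrix (Fin n) (Fin n) ℝ)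
    (k : ℕ) (z w : Fin n → ℂ) :
    ∃ p : ℂ[X], p.natDegree ≤ k ∧
      ∀ t, p.eval t = minorPolyCardDual A k (AffineMap.lineMap z w t) := by
  refine ⟨∑ S ∈ univ.filter (fun S : Finset (Fin n) => S.card = k),
    C (principalMinor A S : ℂ) * ∏ i ∈ S, (C (w i - z i) * X + C (z i)), ?_, fun t => ?_⟩
  · refine natDegree_sum_le_of_forall_le _ _ fun S hS => ?_
    calc (C (principalMinor A S : ℂ) * ∏ i ∈ S, (C (w i - z i) * X + C (z i))).natDegree
        ≤ (∏ i ∈ S, (C (w i - z i) * X + C (z i))).natDegree := natDegree_C_mul_le _ _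
      _ ≤ ∑ i ∈ S, (C (w i - z i) * X + C (z i)).natDegree := natDegree_prod_le _ _
      _ ≤ ∑ _i ∈ S, 1 := by gcongr; exact natDegree_linear_le
      _ = k := by rw [← card_eq_sum_ones, (mem_filter.1 hS).2]
  · simp [minorPolyCardDual, eval_finsetSum, eval_prod, AffineMap.lineMap_apply, mul_comm]

-- The constant is independent of `A`, so the bound survives perturbing a semidefinite matrix.
theorem exists_norm_minorPolyCardDual_le_of_posDef (hk : k ≤ n)
    (hz : ∀ i, inSector (1 / 2) (z i)) (w : Fin n → ℂ) :
    ∃ c : ℝ, ∀ A : Matrix (Fin n) (Fin n) ℝ, (A + Aᵀ).PosDef →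
      ‖minorPolyCardDual A k w‖ ≤ c * ‖minorPolyCardDual A k z‖ := by
  have hsector : ∀ᶠ t in 𝓝 (0 : ℂ), ∀ i, inSector (1 / 2) (AffineMap.lineMap z w t i) := by
    refine eventually_all.2 fun i => ?_
    have hcont : Continuous fun t : ℂ => AffineMap.lineMap z w t i := by
      simp only [AffineMap.lineMap_apply]
      fun_prop
    refine (hcont.tendsto 0).eventually (inSector.eventually (by norm_num) ?_)
    simpa using hz i
  obtain ⟨ρ, hρ, hball⟩ := Metric.eventually_nhds_iff.1 hsector
  refine ⟨(1 + 1 / ρ) ^ k, fun A hA => ?_⟩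
  obtain ⟨p, hdeg, heval⟩ := exists_polynomial_eval_eq_minorPolyCardDual_lineMap A k z w
  have hroots : ∀ r, p.IsRoot r → ρ ≤ ‖0 - r‖ := fun r hr => by
    by_contra! hlt
    refine minorPolyCardDual_ne_zero_of_posDef hA hk (hball ?_) ((heval r).symm.trans hr)
    rwa [dist_comm, dist_eq_norm]
  calc ‖minorPolyCardDual A k w‖ = ‖p.eval 1‖ := by rw [heval, AffineMap.lineMap_apply_one]
    _ ≤ (1 + 1 / ρ) ^ p.natDegree * ‖p.eval 0‖ := by
        simpa using norm_eval_le_mul_norm_eval hρ hroots 1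
    _ ≤ (1 + 1 / ρ) ^ k * ‖minorPolyCardDual A k z‖ := by
        rw [heval, AffineMap.lineMap_apply_zero]
        gcongr
        exact le_add_of_nonneg_right (by positivity)

theorem minorPolyCardDual_eq_zero_of_eq_zero_of_inSector (hA : (A + Aᵀ).PosSemidef) (hk : k ≤ n)
    (hz : ∀ i, inSector (1 / 2) (z i)) (h : minorPolyCardDual A k z = 0) (w : Fin n → ℂ) :
    minorPolyCardDual A k w = 0 := by
  obtain ⟨c, hc⟩ := exists_norm_minorPolyCardDual_le_of_posDef hk hz w
  have hle : ‖minorPolyCardDual A k w‖ ≤ c * ‖minorPolyCardDual A k z‖ := by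
    refine le_of_tendsto_of_tendsto (tendsto_minorPolyCardDual_add_smul_one A k w).norm
      ((tendsto_minorPolyCardDual_add_smul_one A k z).norm.const_mul c) ?_
    filter_upwards [self_mem_nhdsWithin] with ε hε
    exact hc _ (posDef_add_smul_one hA hε)
  simpa [h] using hle

theorem principalMinor_eq_zero_of_minorPolyCardDual_one_eq_zero (hA : (A + Aᵀ).PosSemidef)
    (h : minorPolyCardDual A k 1 = 0) {S : Finset (Fin n)} (hS : S.card = k) :
    principalMinor A S = 0 := by
  have hsum : ∑ S ∈ univ.filter (fun S : Finset (Fin n) => S.card = k), principalMinor A S = 0 := by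
    simpa [minorPolyCardDual, ← Complex.ofReal_sum] using h
  rw [sum_eq_zero_iff_of_nonneg fun S _ => principalMinor_nonneg hA S] at hsum
  exact hsum S (by simpa using hS)

end Perturbation

/-- If `A + Aᵀ` is positive semidefinite and `0 ≤ k ≤ n`, then both
`f_k = Σ_{|S|=k} det(A_{S,S}) z^{[n]∖S}` and its dual `f_k* = Σ_{|S|=k} det(A_{S,S}) z^S`
have nonnegative coefficients, and each is either identically zero or `Γ_{1/2}`-stable. -/
theorem minorPolyCard_nonneg_and_sectorStable {n : ℕ} (A : Matrix (Fin n) (Fin n) ℝ)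
    (hA : (A + Aᵀ).PosSemidef) (k : ℕ) (hk : k ≤ n) :
    (∀ S : Finset (Fin n), S.card = k → 0 ≤ principalMinor A S) ∧
      ((∀ z : Fin n → ℂ, minorPolyCard A k z = 0) ∨
        (∀ z : Fin n → ℂ, (∀ i, inSector (1 / 2) (z i)) → minorPolyCard A k z ≠ 0)) ∧
      ((∀ z : Fin n → ℂ, minorPolyCardDual A k z = 0) ∨
        (∀ z : Fin n → ℂ, (∀ i, inSector (1 / 2) (z i)) → minorPolyCardDual A k z ≠ 0)) := by
  refine ⟨fun S _ => principalMinor_nonneg hA S, ?_⟩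
  by_cases h : ∀ S : Finset (Fin n), S.card = k → principalMinor A S = 0
  · exact ⟨.inl (minorPolyCard_eq_zero_of_principalMinor_eq_zero h),
      .inl (minorPolyCardDual_eq_zero_of_principalMinor_eq_zero h)⟩
  · have hdual : ∀ z : Fin n → ℂ, (∀ i, inSector (1 / 2) (z i)) → minorPolyCardDual A k z ≠ 0 :=
      fun z hz h0 => h fun S hS => principalMinor_eq_zero_of_minorPolyCardDual_one_eq_zero hA
        (minorPolyCardDual_eq_zero_of_eq_zero_of_inSector hA hk hz h0 1) hS
    refine ⟨.inr fun z hz => ?_, .inr hdual⟩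
    rw [minorPolyCard_eq_prod_mul_minorPolyCardDual_inv A k fun i => (hz i).1]
    exact mul_ne_zero (prod_ne_zero_iff.2 fun i _ => (hz i).1) (hdual _ fun i => (hz i).inv)
end
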